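/- Let R be a regular local ring of dimension 2 with residue field k, and let I ⊆ J be ideals of R such that R/I and R/J have finite length. Then the restriction map Hom_R(J, R) → Hom_R(I, R) is an isomorphism, and both are isomorphic to R (via the inclusion Hom_R(R,R) → Hom_R(J,R)). -/

import Mathlib

open CategoryTheory IsLocalRing

/-- Existence of a regular system of parameters `x, y` with `R` a domain, `x` prime, `x ∤ y`. -/
theorem exists_good_params (R : Type) [CommRing R] [IsLocalRing R] [IsNoetherianRing R]
    (hreg : (Module.finrank (ResidueField R) (CotangentSpace R) : WithBot ℕ∞)
      = ringKrullDim R)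
    (hdim : ringKrullDim R = 2) :
    IsDomain R ∧ ∃ x y : R, x ∈ maximalIdeal R ∧ y ∈ maximalIdeal R ∧ Prime x ∧ ¬ x ∣ y := by
  have hjac : maximalIdeal R ≤ Ideal.jacobson (⊥ : Ideal R) := maximalIdeal_le_jacobson _
  have hht : (maximalIdeal R).height = 2 := by
    have := maximalIdeal_height_eq_ringKrullDim (R := R)
    rw [hdim] at this
    exact WithBot.coe_injective this
  have hnotle : ¬ (maximalIdeal R).height ≤ 1 := by
    rw [hht]; decide
  have hrank : (maximalIdeal R).spanFinrank = 2 := by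
    rw [spanFinrank_maximalIdeal_eq_finrank_cotangentSpace]
    rw [hdim] at hreg
    exact_mod_cast hreg
  have hfg : (maximalIdeal R).FG := IsNoetherian.noetherian _
  obtain ⟨a, b, hab⟩ : ∃ a b : R, maximalIdeal R = Ideal.span {a, b} := by
    have h := Submodule.FG.generators_ncard hfg
    rw [hrank, Set.ncard_eq_two] at h
    obtain ⟨a, b, -, h⟩ := h
    refine ⟨a, b, ?_⟩
    rw [← h]
    exact (Submodule.span_generators _).symm
  have hsq : ¬ maximalIdeal R ≤ (maximalIdeal R) ^ 2 := by
    intro h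
    have : maximalIdeal R = ⊥ := by
      refine Submodule.eq_bot_of_le_smul_of_le_jacobson_bot (maximalIdeal R) _ hfg ?_ hjac
      rwa [smul_eq_mul, ← sq]
    rw [this] at hrank
    simp at hrank
  obtain ⟨x, hxm, hxsq, hxmin⟩ : ∃ x ∈ maximalIdeal R, x ∉ (maximalIdeal R) ^ 2 ∧
      ∀ P ∈ minimalPrimes R, x ∉ P := by
    by_contra! hcon
    have hfin : (minimalPrimes R).Finite :=
      Ideal.finite_minimalPrimes_of_isNoetherianRing R ⊥
    classical
    have := (Ideal.subset_union_prime (s := insert ((maximalIdeal R) ^ 2) hfin.toFinset)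
      (f := fun P : Ideal R => P) ((maximalIdeal R) ^ 2) ((maximalIdeal R) ^ 2)
      (by
        intro P hP h1 _
        simp only [Finset.mem_insert, Set.Finite.mem_toFinset] at hP
        exact (hP.resolve_left h1).1.1) (I := maximalIdeal R)).1 (by
        intro z hz
        by_cases h : z ∈ (maximalIdeal R) ^ 2
        · simp only [Set.mem_iUnion]
          exact ⟨_, by simp, h⟩
        · obtain ⟨P, hP, hzP⟩ := hcon z hz h
          simp only [Set.mem_iUnion]
          exact ⟨P, by simp [hP], hzP⟩)
    obtain ⟨P, hP, hle⟩ := this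
    simp only [Finset.mem_insert, Set.Finite.mem_toFinset] at hP
    rcases hP with rfl | hP
    · exact hsq hle
    · exact hnotle ((Ideal.height_mono hle).trans
        (Ideal.height_le_one_of_isPrincipal_of_mem_minimalPrimes ⊥ P hP))
  obtain ⟨y, hxy⟩ : ∃ y, maximalIdeal R = Ideal.span {x, y} := by
    have ham : a ∈ maximalIdeal R := hab ▸ Ideal.subset_span (by simp)
    have hbm : b ∈ maximalIdeal R := hab ▸ Ideal.subset_span (by simp)
    have hx' := hxm
    rw [hab, Ideal.mem_span_pair] at hx'
    obtain ⟨u, v, huv⟩ := hx'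
    have key : ∀ a b u v : R, a ∈ maximalIdeal R → b ∈ maximalIdeal R →
        maximalIdeal R = Ideal.span {a, b} →
        u * a + v * b = x → IsUnit u → maximalIdeal R = Ideal.span {x, b} := by
      intro a b u v ha hb hab h hu
      obtain ⟨w, hw⟩ := hu.exists_right_inv
      apply le_antisymm
      · rw [hab, Ideal.span_le]
        rintro z (rfl | rfl)
        · exact Ideal.mem_span_pair.2 ⟨w, - w * v, by linear_combination (-w) * h + z * hw⟩
        · exact Ideal.subset_span (by simp)
      · rw [Ideal.span_le]
        rintro z (rfl | rfl)
        · exact hxm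
        · exact hb
    by_cases hu : IsUnit u
    · exact ⟨b, key a b u v ham hbm hab huv hu⟩
    by_cases hv : IsUnit v
    · exact ⟨a, key b a v u hbm ham (by rw [hab, Set.pair_comm]) (by rw [← huv]; ring) hv⟩
    exfalso
    apply hxsq
    rw [← huv, sq]
    exact add_mem (Ideal.mul_mem_mul ((mem_maximalIdeal _).2 hu) ham)
      (Ideal.mul_mem_mul ((mem_maximalIdeal _).2 hv) hbm)
  have hym : y ∈ maximalIdeal R := hxy ▸ Ideal.subset_span (by simp)
  obtain ⟨P, hP, hPm⟩ := Ideal.exists_minimalPrimes_le (I := Ideal.span {x})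
    (J := maximalIdeal R) ((Ideal.span_singleton_le_iff_mem _).2 hxm)
  have hPprime : P.IsPrime := hP.1.1
  have hxP : x ∈ P := (Ideal.span_singleton_le_iff_mem _).1 hP.1.2
  have hyP : y ∉ P := by
    intro hy
    apply hnotle
    refine (Ideal.height_mono (J := P) ?_).trans
      (Ideal.height_le_one_of_isPrincipal_of_mem_minimalPrimes (Ideal.span {x}) P hP)
    rw [hxy, Ideal.span_le]
    rintro z (rfl | rfl)
    · exact hxP
    · exact hy
  have hPle : P ≤ Ideal.span {x} := by
    refine Submodule.le_of_le_smul_of_le_jacobson_bot (I := maximalIdeal R)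
      (IsNoetherian.noetherian _) hjac ?_
    intro p hp
    have hp' := hPm hp
    rw [hxy, Ideal.mem_span_pair] at hp'
    obtain ⟨u, v, rfl⟩ := hp'
    refine Submodule.add_mem_sup (Ideal.mem_span_singleton'.2 ⟨u, rfl⟩) ?_
    have h1 : v * y ∈ P := by
      have := P.sub_mem hp (P.mul_mem_left u hxP)
      simpa using this
    have hv : v ∈ P := (hPprime.mem_or_mem h1).resolve_right hyP
    rw [mul_comm]
    exact Submodule.smul_mem_smul hym hv
  have hPeq : P = Ideal.span {x} := le_antisymm hPle hP.1.2
  obtain ⟨Q, hQ, hQP⟩ := Ideal.exists_minimalPrimes_le (I := (⊥ : Ideal R)) (J := P) bot_le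
  have hQprime : Q.IsPrime := hQ.1.1
  have hxQ : x ∉ Q := hxmin Q hQ
  have hQbot : Q = ⊥ := by
    refine Submodule.eq_bot_of_le_smul_of_le_jacobson_bot (maximalIdeal R) Q
      (IsNoetherian.noetherian _) ?_ hjac
    intro q hq
    obtain ⟨c, rfl⟩ := Ideal.mem_span_singleton'.1 (hPle (hQP hq))
    have hc : c ∈ Q := (hQprime.mem_or_mem hq).resolve_right hxQ
    rw [mul_comm]
    exact Submodule.smul_mem_smul hxm hc
  have hdom : IsDomain R := by
    rw [hQbot] at hQprime
    exact IsDomain.of_bot_isPrime R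
  have hx0 : x ≠ 0 := fun h => hxQ (h ▸ Q.zero_mem)
  refine ⟨hdom, x, y, hxm, hym, ?_, ?_⟩
  · rw [← Ideal.span_singleton_prime hx0, ← hPeq]
    exact hPprime
  · intro h
    exact hyP (hPeq ▸ Ideal.mem_span_singleton.2 h)

theorem smul_subtype_bijective (R : Type) [CommRing R] [IsLocalRing R] [IsDomain R]
    (x y : R) (hx : x ∈ maximalIdeal R) (hy : y ∈ maximalIdeal R) (hp : Prime x)
    (hxy : ¬ x ∣ y) (J : Ideal R) (hJ : IsFiniteLength R (R ⧸ J)) :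
    Function.Bijective (fun r : R => r • (Submodule.subtype J)) := by
  obtain ⟨-, hart⟩ := isFiniteLength_iff_isNoetherian_isArtinian.1 hJ
  have : IsArtinianRing (R ⧸ J) := isArtinian_of_tower R hart
  obtain ⟨n, hn⟩ := exists_maximalIdeal_pow_le_of_isArtinianRing_quotient J
  have hxn : x ^ n ∈ J := hn (Ideal.pow_mem_pow hx n)
  have hyn : y ^ n ∈ J := hn (Ideal.pow_mem_pow hy n)
  have hx0 : x ^ n ≠ 0 := pow_ne_zero _ hp.ne_zero
  constructor
  · intro r s h
    have := LinearMap.congr_fun h ⟨x ^ n, hxn⟩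
    exact mul_right_cancel₀ hx0 (by simpa using this)
  · intro φ
    have comm : ∀ a b : J, (a : R) * φ b = b * φ a := by
      intro a b
      rw [← smul_eq_mul, ← smul_eq_mul, ← map_smul, ← map_smul]
      congr 1
      ext
      simp [mul_comm]
    have h1 := comm ⟨x ^ n, hxn⟩ ⟨y ^ n, hyn⟩
    have hdvd : x ^ n ∣ φ ⟨x ^ n, hxn⟩ :=
      hp.pow_dvd_of_dvd_mul_left n (fun h => hxy (hp.dvd_of_dvd_pow h)) ⟨_, h1.symm⟩
    obtain ⟨r, hr⟩ := hdvd
    refine ⟨r, ?_⟩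
    ext j
    have h2 := comm ⟨x ^ n, hxn⟩ j
    rw [hr] at h2
    apply mul_left_cancel₀ hx0
    simp only [LinearMap.smul_apply, Submodule.subtype_apply, smul_eq_mul]
    linear_combination -h2



/-- Let `R` be a regular local ring of Krull dimension 2 (with residue field `k`), and let
`I ⊆ J` be ideals of `R` such that `R/I` and `R/J` have finite length.  Then the
restriction map `Hom_R(J, R) → Hom_R(I, R)` is an isomorphism, and both are isomorphic
to `R` via the map `R ≅ Hom_R(R,R) → Hom_R(J,R)`. -/
theorem stmt_4 (R : Type) [CommRing R] [IsLocalRing R] [IsNoetherianRing R]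
    (hreg : (Module.finrank (ResidueField R) (CotangentSpace R) : WithBot ℕ∞)
      = ringKrullDim R)
    (hdim : ringKrullDim R = 2)
    (I J : Ideal R) (hIJ : I ≤ J)
    (hI : IsFiniteLength R (R ⧸ I)) (hJ : IsFiniteLength R (R ⧸ J)) :
    Function.Bijective
        (fun φ : (J →ₗ[R] R) => φ.comp (Submodule.inclusion hIJ)) ∧
      Function.Bijective (fun r : R => r • (Submodule.subtype J)) := by
  obtain ⟨hdom, x, y, hx, hy, hp, hxy⟩ := exists_good_params R hreg hdim
  have bI := smul_subtype_bijective R x y hx hy hp hxy I hI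
  have bJ := smul_subtype_bijective R x y hx hy hp hxy J hJ
  refine ⟨?_, bJ⟩
  rw [← Function.Bijective.of_comp_iff _ bJ]
  exact bI
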